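/- There is an injective homomorphism of real Lie algebras from 𝔰𝔭(6,ℝ) into 𝔰𝔩(6,ℝ) whose image is a maximal Lie subalgebra of 𝔰𝔩(6,ℝ), and this image is an S-subalgebra (its complexification is contained in no proper regular subalgebra of 𝔰𝔩(6,ℂ)). -/

import Mathlib

/-!
Let `J` be the matrix of a symplectic form `ω` on `K⁶` with `J * J = -1`. The `J`-skew matrices
(`Xᵀ * J + J * X = 0`) form `𝔰𝔭`, and every matrix is half the sum of a skew part and a
self-adjoint part `S = T + adj J T`. The argument rests on three facts, each valid over `ℂ` and
the first two over any field of characteristic zero.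

* `SpMax.mem_of_trace_eq_zero`: a subalgebra containing `𝔰𝔭` and one further traceless matrix `T`
  contains all of `𝔰𝔩`. The part `S` is not scalar, so `S v` is not a multiple of `v` for some `v`;
  bracketing `S` with the transvection `x ↦ ω(v, x) v` puts a rank one operator `x ↦ ω(w, x) u`
  with `u ∉ K w` into the subalgebra. Further brackets with transvections move `u` over all of
  `w^⊥` (`SpMax.spread`) and then `w` over all nonzero vectors (`SpMax.transfer`). These operators
  include all the off-diagonal matrix units, which generate `𝔰𝔩`.
* `SpMax.isSk_of_normalizes`: `𝔰𝔭` is its own normalizer in `𝔰𝔩`.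
* `SpMax.not_cartan_le`: no Cartan subalgebra `H` of `𝔰𝔩(6, ℂ)` lies in `𝔰𝔭`. As `H` is abelian,
  a product of two elements of `H` is self-adjoint and commutes with `H`; since `H` is its own
  centralizer, such a product differs by a scalar from an element of `H`, which is both skew and
  self-adjoint and hence zero. So all products of elements of `H` are scalar. If all squares
  vanish, `H` consists of ad-nilpotent, ad-semisimple elements and is zero. Otherwise `H` is a line
  spanned by some `x` with `x² = l² ≠ 0`, and the projection `P` onto the `l`-eigenspace has rank 3
  while `P A P` is a multiple of `P` for every matrix `A`, which is absurd.

The first fact over `ℝ` is the maximality of `𝔰𝔭(6, ℝ)`. Over `ℂ`, a proper regular subalgebra `r`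
containing the complexification of the image, that is `𝔰𝔭(6, ℂ)`, equals it by the first fact; the
Cartan subalgebra normalizing `r` then lies in `𝔰𝔭(6, ℂ)` by the second, against the third.
-/

/-!
STATEMENT 18: There is an injective homomorphism of real Lie algebras from 𝔰𝔭(6,ℝ) into
𝔰𝔩(6,ℝ) whose image is a maximal Lie subalgebra of 𝔰𝔩(6,ℝ), and this image is an
S-subalgebra: its complexification is contained in no proper regular subalgebra of 𝔰𝔩(6,ℂ).
-/

open LieAlgebra

/-- A Lie subalgebra is *regular* if it is normalized by some Cartan subalgebra. -/
def LieSubalgebra.IsRegularSubalgebra {K L : Type*} [Field K] [LieRing L] [LieAlgebra K L]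
    (r : LieSubalgebra K L) : Prop :=
  ∃ H : LieSubalgebra K L, H.IsCartanSubalgebra ∧ ∀ x ∈ H, ∀ y ∈ r, ⁅x, y⁆ ∈ r

/-- A maximal Lie subalgebra: a proper subalgebra not properly contained in any other proper
subalgebra. -/
def IsMaxSubalgebra {K L : Type*} [Field K] [LieRing L] [LieAlgebra K L]
    (m : LieSubalgebra K L) : Prop :=
  m ≠ ⊤ ∧ ∀ s : LieSubalgebra K L, s ≠ ⊤ → m ≤ s → s = m

/-- The complexification, inside 𝔰𝔩(6,ℂ), of the image of a morphism into 𝔰𝔩(6,ℝ). -/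
noncomputable def complexifiedRange
    (φ : ↥(Symplectic.sp (Fin 3) ℝ) →ₗ⁅ℝ⁆ ↥(SpecialLinear.sl (Fin 6) ℝ)) :
    LieSubalgebra ℂ ↥(SpecialLinear.sl (Fin 6) ℂ) :=
  LieSubalgebra.lieSpan ℂ _
    {x : ↥(SpecialLinear.sl (Fin 6) ℂ) | ∃ A : ↥(Symplectic.sp (Fin 3) ℝ),
      ((φ A : Matrix (Fin 6) (Fin 6) ℝ)).map (Complex.ofReal : ℝ → ℂ) =
        (x : Matrix (Fin 6) (Fin 6) ℂ)}

namespace SpMax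
open Matrix

set_option linter.unusedSectionVars false

/-! ### Rank one operators, skew and self-adjoint matrices -/

section Generic

variable {K ι : Type*} [Field K] [Fintype ι] [DecidableEq ι]

/-- The bilinear form `ω(u, w) = uᵀ J w` with matrix `J`. -/
def omega (J : Matrix ι ι K) (u w : ι → K) : K := (u ᵥ* J) ⬝ᵥ w

/-- The rank one operator `x ↦ ω(w, x) u`. -/
def rankOne (J : Matrix ι ι K) (u w : ι → K) : Matrix ι ι K := vecMulVec u (w ᵥ* J)

/-- `X` is skew for the form `J`: `ω(X u, w) = -ω(u, X w)`. -/
def IsSk (J X : Matrix ι ι K) : Prop := Xᵀ * J + J * X = 0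

/-- `X` is self-adjoint for the form `J`: `ω(X u, w) = ω(u, X w)`. -/
def IsSa (J X : Matrix ι ι K) : Prop := Xᵀ * J = J * X

variable {J : Matrix ι ι K}

lemma mulVec_eq_neg (hJt : Jᵀ = -J) (u : ι → K) : J *ᵥ u = -(u ᵥ* J) := by
  rw [← vecMul_transpose, hJt, vecMul_neg]

lemma omega_symm (hJt : Jᵀ = -J) (u w : ι → K) : omega J w u = - omega J u w := by
  unfold omega
  rw [← dotProduct_mulVec, mulVec_eq_neg hJt, dotProduct_neg, dotProduct_comm]

lemma omega_add_left (u u' w : ι → K) : omega J (u + u') w = omega J u w + omega J u' w := by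
  simp [omega, add_vecMul]
lemma omega_smul_left (c : K) (u w : ι → K) : omega J (c • u) w = c * omega J u w := by
  simp [omega, smul_vecMul]
lemma omega_add_right (u w w' : ι → K) : omega J u (w + w') = omega J u w + omega J u w' := by
  simp [omega]
lemma omega_sub_right (u w w' : ι → K) : omega J u (w - w') = omega J u w - omega J u w' := by
  simp [omega]
lemma omega_smul_right (c : K) (u w : ι → K) : omega J u (c • w) = c * omega J u w := by
  simp [omega]

lemma omega_self [CharZero K] (hJt : Jᵀ = -J) (u : ι → K) : omega J u u = 0 := by
  have := omega_symm hJt u u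
  linear_combination (1/2 : K) * this

/-- Every vector is of the form `w ᵥ* J`, so every linear functional is `omega J w`. -/
lemma exists_vecMul_eq (hJJ : J * J = -1) (f : ι → K) : ∃ w, w ᵥ* J = f :=
  ⟨-(f ᵥ* J), by rw [neg_vecMul, vecMul_vecMul, hJJ, vecMul_neg, vecMul_one, neg_neg]⟩

lemma exists_omega_eq_one (hJJ : J * J = -1) {w : ι → K} (hw : w ≠ 0) :
    ∃ a, omega J w a = 1 := by
  obtain ⟨i, hi⟩ : ∃ i, (w ᵥ* J) i ≠ 0 := by
    by_contra! h
    have h0 : w ᵥ* J = 0 := funext h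
    have : w ᵥ* J ᵥ* J = -w := by rw [vecMul_vecMul, hJJ, vecMul_neg, vecMul_one]
    rw [h0, zero_vecMul] at this
    exact hw (by simpa using this.symm)
  refine ⟨Pi.single i ((w ᵥ* J) i)⁻¹, ?_⟩
  simp [omega, hi]

lemma rankOne_mulVec (u w x : ι → K) : rankOne J u w *ᵥ x = omega J w x • u := by
  simp [rankOne, vecMulVec_mulVec, omega]

lemma mul_rankOne (M : Matrix ι ι K) (u w : ι → K) : M * rankOne J u w = rankOne J (M *ᵥ u) w := by
  simp [rankOne, mul_vecMulVec]

lemma rankOne_mul_sk {X : Matrix ι ι K} (hX : IsSk J X) (u w : ι → K) :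
    rankOne J u w * X = -rankOne J u (X *ᵥ w) := by
  have h : J * X = -(Xᵀ * J) := by rw [eq_neg_iff_add_eq_zero, add_comm]; exact hX
  rw [rankOne, rankOne, vecMulVec_mul, vecMul_vecMul, h, ← vecMulVec_neg, vecMul_neg,
    ← vecMul_vecMul, vecMul_transpose]

lemma rankOne_mul_sa {X : Matrix ι ι K} (hX : IsSa J X) (u w : ι → K) :
    rankOne J u w * X = rankOne J u (X *ᵥ w) := by
  rw [rankOne, rankOne, vecMulVec_mul, vecMul_vecMul, ← hX, ← vecMul_vecMul, vecMul_transpose]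

lemma trace_rankOne (u w : ι → K) : (rankOne J u w).trace = omega J w u := by
  rw [rankOne, trace_vecMulVec, dotProduct_comm, omega]

lemma rankOne_add_left (u u' w : ι → K) :
    rankOne J (u + u') w = rankOne J u w + rankOne J u' w := by
  simp [rankOne, add_vecMulVec]
lemma rankOne_smul_left (c : K) (u w : ι → K) :
    rankOne J (c • u) w = c • rankOne J u w := by
  simp [rankOne, smul_vecMulVec]
lemma rankOne_smul_right (c : K) (u w : ι → K) :
    rankOne J u (c • w) = c • rankOne J u w := by
  simp [rankOne, smul_vecMul, vecMulVec_smul]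

lemma isSk_rankOne_add (hJt : Jᵀ = -J) (u w : ι → K) :
    IsSk J (rankOne J u w + rankOne J w u) := by
  simp only [IsSk, rankOne, transpose_add, transpose_vecMulVec, add_mul, mul_add, vecMulVec_mul,
    mul_vecMulVec, mulVec_eq_neg hJt, neg_vecMulVec]
  abel

lemma isSk_rankOne_self [CharZero K] (hJt : Jᵀ = -J) (z : ι → K) : IsSk J (rankOne J z z) := by
  have := isSk_rankOne_add hJt z z
  rw [← two_smul K] at this
  rw [IsSk] at this ⊢
  rw [transpose_smul, Matrix.smul_mul, Matrix.mul_smul, ← smul_add, smul_eq_zero] at this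
  exact this.resolve_left two_ne_zero

lemma isSa_rankOne_sub (hJt : Jᵀ = -J) (u w : ι → K) :
    IsSa J (rankOne J u w - rankOne J w u) := by
  simp only [IsSa, rankOne, transpose_sub, transpose_vecMulVec, sub_mul, mul_sub, vecMulVec_mul,
    mul_vecMulVec, mulVec_eq_neg hJt, neg_vecMulVec]
  abel

lemma eq_zero_of_isSk_of_isSa [CharZero K] (hJJ : J * J = -1) {X : Matrix ι ι K}
    (h1 : IsSk J X) (h2 : IsSa J X) : X = 0 := by
  rw [IsSk, h2, ← two_smul K, smul_eq_zero] at h1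
  have h3 : J * X = 0 := h1.resolve_left two_ne_zero
  have : J * J * X = 0 := by rw [mul_assoc, h3, mul_zero]
  simpa [hJJ] using this

/-- The adjoint of `T` for the form `J`, namely `J⁻¹ Tᵀ J`, written with `J⁻¹ = -J`. -/
def adj (J T : Matrix ι ι K) : Matrix ι ι K := -(J * Tᵀ * J)

lemma isSa_add_adj (hJt : Jᵀ = -J) (hJJ : J * J = -1) (T : Matrix ι ι K) :
    IsSa J (T + adj J T) := by
  have h1 : ∀ M, J * (J * M) = -M := fun M => by rw [← mul_assoc, hJJ]; simp
  simp only [IsSa, adj, transpose_add, transpose_neg, transpose_mul, transpose_transpose, hJt,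
    add_mul, mul_add, mul_assoc, neg_mul, mul_neg, hJJ, h1]
  simp [add_comm]

lemma isSk_sub_adj (hJt : Jᵀ = -J) (hJJ : J * J = -1) (T : Matrix ι ι K) :
    IsSk J (T - adj J T) := by
  have h1 : ∀ M, J * (J * M) = -M := fun M => by rw [← mul_assoc, hJJ]; simp
  simp only [IsSk, adj, transpose_sub, transpose_neg, transpose_mul, transpose_transpose, hJt,
    sub_mul, mul_sub, mul_assoc, neg_mul, mul_neg, hJJ, h1]
  simp

lemma trace_adj (hJJ : J * J = -1) (T : Matrix ι ι K) : (adj J T).trace = T.trace := by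
  rw [adj, trace_neg, trace_mul_comm, ← mul_assoc, hJJ]; simp

lemma isSk_iff_adj (hJJ : J * J = -1) (T : Matrix ι ι K) : IsSk J T ↔ T + adj J T = 0 := by
  have h1 : ∀ M, J * (J * M) = -M := fun M => by rw [← mul_assoc, hJJ]; simp
  have e : J * (Tᵀ * J + J * T) = -(T + adj J T) := by
    rw [mul_add, h1, adj, mul_assoc]; abel
  constructor
  · intro h
    rw [IsSk] at h
    rw [h, mul_zero] at e
    exact neg_eq_zero.1 e.symm
  · intro h
    rw [h, neg_zero] at e
    have := h1 (Tᵀ * J + J * T)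
    rw [e, mul_zero] at this
    exact neg_eq_zero.1 this.symm

lemma trace_eq_zero_of_isSk [CharZero K] (hJJ : J * J = -1) {T : Matrix ι ι K} (h : IsSk J T) :
    T.trace = 0 := by
  have := congrArg trace ((isSk_iff_adj hJJ T).1 h)
  rw [trace_add, trace_adj hJJ, trace_zero] at this
  linear_combination (1/2 : K) * this

/-- A matrix for which every vector is an eigenvector is scalar. -/
lemma eq_smul_one_of_forall {S : Matrix ι ι K} (h : ∀ v : ι → K, ∃ c : K, S *ᵥ v = c • v) :
    ∃ c : K, S = c • 1 := by
  obtain ⟨a, ha⟩ := (Matrix.toLin' S).exists_eq_smul_id_of_forall_notLinearIndependent fun v => by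
    obtain ⟨c, hc⟩ := h v
    intro hli
    have := LinearIndependent.pair_iff.1 hli c (-1) (by simp [hc])
    simp at this
  refine ⟨a, ?_⟩
  apply Matrix.toLin'.injective
  rw [ha]
  ext; simp

/-- The self-adjoint part of a traceless, non-skew matrix is not scalar: were it a scalar, it would
vanish for trace reasons. -/
lemma exists_not_smul [CharZero K] (hJJ : J * J = -1) [Nonempty ι]
    {T : Matrix ι ι K} (ht : T.trace = 0) (hT : ¬ IsSk J T) :
    ∃ v : ι → K, ∀ c : K, (T + adj J T) *ᵥ v ≠ c • v := by
  by_contra! h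
  obtain ⟨c, hc⟩ := eq_smul_one_of_forall h
  have h2 := congrArg trace hc
  rw [trace_add, trace_adj hJJ, ht, trace_smul, trace_one] at h2
  have hc0 : c = 0 := by
    simpa using h2
  rw [hc0, zero_smul] at hc
  exact hT ((isSk_iff_adj hJJ T).2 hc)

lemma omega_apply_self [CharZero K] (hJt : Jᵀ = -J) {S : Matrix ι ι K} (hS : IsSa J S)
    (v : ι → K) : omega J v (S *ᵥ v) = 0 := by
  have h : omega J (S *ᵥ v) v = omega J v (S *ᵥ v) := by
    unfold omega
    rw [dotProduct_mulVec, ← vecMul_transpose, vecMul_vecMul, hS, ← vecMul_vecMul]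
  have := omega_symm hJt v (S *ᵥ v)
  rw [h] at this
  linear_combination (1/2 : K) * this

/-! ### Subalgebras containing `𝔰𝔭` -/

section Sub

-- Subalgebras are encoded as submodules closed under commutators.
variable [CharZero K] (hJt : Jᵀ = -J) (hJJ : J * J = -1) (s : Submodule K (Matrix ι ι K))
  (hs : ∀ A ∈ s, ∀ B ∈ s, A * B - B * A ∈ s) (hsp : ∀ X, IsSk J X → X ∈ s)

include hJt hsp in
lemma rankOne_swap {u w : ι → K} (h : rankOne J u w ∈ s) : rankOne J w u ∈ s := by
  simpa using s.sub_mem (hsp _ (isSk_rankOne_add hJt u w)) h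

include hJt hsp in
lemma rankOne_self_mem (z : ι → K) : rankOne J z z ∈ s :=
  hsp _ (isSk_rankOne_self hJt z)

include hJt hJJ hs hsp in
/-- If `u ∉ K w`, the operator `rankOne J u w` brings along all `rankOne J z w` with `z ⊥ w`. -/
lemma spread {u w : ι → K} (hw : w ≠ 0) (hu : ∀ c : K, u ≠ c • w)
    (h : rankOne J u w ∈ s) (z : ι → K) (hz : omega J z w = 0) : rankOne J z w ∈ s := by
  obtain ⟨a, ha⟩ := exists_omega_eq_one hJJ hw
  have ha' : omega J a w = -1 := by rw [omega_symm hJt, ha]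
  -- Otherwise `w^⊥ ⊆ u^⊥`, which forces `u` to be a multiple of `w`.
  obtain ⟨z₀, hz₀w, hz₀u⟩ : ∃ z₀, omega J z₀ w = 0 ∧ omega J z₀ u ≠ 0 := by
    by_contra! hcon
    refine hu (-omega J a u) ?_
    by_contra hne
    obtain ⟨b, hb⟩ := exists_omega_eq_one hJJ (sub_ne_zero.2 hne)
    have h1 := hcon (b + omega J b w • a) (by rw [omega_add_left, omega_smul_left, ha']; ring)
    rw [omega_add_left, omega_smul_left] at h1
    rw [omega_symm hJt, omega_sub_right, omega_smul_right] at hb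
    exact one_ne_zero (α := K) (by linear_combination -h1 - hb)
  -- Bracketing with the transvection `rankOne z z` moves `u` to `z`.
  have key : ∀ z, omega J z w = 0 → omega J z u ≠ 0 → rankOne J z w ∈ s := by
    intro z hzw hzu
    have hX : IsSk J (rankOne J z z) := isSk_rankOne_self hJt z
    have h1 := hs _ (hsp _ hX) _ h
    rw [mul_rankOne, rankOne_mul_sk hX, rankOne_mulVec, rankOne_mulVec, hzw, rankOne_smul_left,
      rankOne_smul_right, zero_smul, neg_zero, sub_zero] at h1
    exact (s.smul_mem_iff hzu).1 h1
  by_cases hzu : omega J z u = 0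
  · have h1 := key (z + z₀) (by rw [omega_add_left, hz, hz₀w, add_zero])
      (by rw [omega_add_left, hzu, zero_add]; exact hz₀u)
    rw [rankOne_add_left] at h1
    exact (s.add_mem_iff_left (key z₀ hz₀w hz₀u)).1 h1
  · exact key z hz hzu

include hJt hJJ hs hsp in
/-- If all `rankOne J z w` with `z ⊥ w` are available for one nonzero `w`, they are available for
every nonzero `w'`: pass through `rankOne J w y` and `rankOne J w' y` for an auxiliary `y`
orthogonal to both `w` and `w'` and proportional to neither. -/
lemma transfer (hcard : 4 < Fintype.card ι) {w w' : ι → K} (hw : w ≠ 0) (hw' : w' ≠ 0)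
    (h : ∀ z, omega J z w = 0 → rankOne J z w ∈ s) (z : ι → K) (hz : omega J z w' = 0) :
    rankOne J z w' ∈ s := by
  obtain ⟨a, ha⟩ := exists_omega_eq_one hJJ hw
  obtain ⟨a', ha'⟩ := exists_omega_eq_one hJJ hw'
  -- Four linear conditions on `y` guarantee `y ⊥ w, w'` and `y ∉ K w ∪ K w'`.
  let A : Matrix (Fin 4) ι K := Matrix.of ![w ᵥ* J, w' ᵥ* J, a ᵥ* J, a' ᵥ* J]
  obtain ⟨y, hy, hy0⟩ := Submodule.exists_mem_ne_zero_of_ne_bot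
    (LinearMap.ker_ne_bot_of_finrank_lt (f := A.mulVecLin) (by simpa using hcard))
  have hA : ∀ i, (A *ᵥ y) i = 0 := fun i => congrFun (LinearMap.mem_ker.1 hy) i
  have h0 : omega J w y = 0 := hA 0
  have h1 : omega J w' y = 0 := hA 1
  have h2 : omega J a y = 0 := hA 2
  have h3 : omega J a' y = 0 := hA 3
  have hyw : omega J y w = 0 := by rw [omega_symm hJt, h0, neg_zero]
  have indep : ∀ (v b : ι → K), omega J v b = 1 → omega J b y = 0 → ∀ c : K, y ≠ c • v := by
    rintro v b hvb hby c rfl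
    rw [omega_smul_right, omega_symm hJt, hvb] at hby
    have : c = 0 := by linear_combination -hby
    exact hy0 (by rw [this, zero_smul])
  have hwy : rankOne J w y ∈ s := rankOne_swap hJt s hsp (h y hyw)
  have hwy' : rankOne J w' y ∈ s := by
    refine spread hJt hJJ s hs hsp hy0 (fun c hc => ?_) hwy w' h1
    have hc0 : c ≠ 0 := by rintro rfl; exact hw (by simpa using hc)
    exact indep w a ha h2 c⁻¹ (by rw [hc, smul_smul, inv_mul_cancel₀ hc0, one_smul])
  refine spread hJt hJJ s hs hsp hw' (indep w' a' ha' h3) (rankOne_swap hJt s hsp hwy') z hz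

include hJt hJJ hs hsp in
/-- A subalgebra containing `𝔰𝔭` and a traceless matrix outside `𝔰𝔭` contains `𝔰𝔩`. -/
theorem mem_of_trace_eq_zero (hcard : 4 < Fintype.card ι) {T : Matrix ι ι K} (hTs : T ∈ s)
    (hT0 : T.trace = 0) (hT : ¬ IsSk J T) (M : Matrix ι ι K) (hM : M.trace = 0) : M ∈ s := by
  have : Nonempty ι := Fintype.card_pos_iff.1 (by omega)
  obtain ⟨v, hv⟩ := exists_not_smul hJJ hT0 hT
  set S := T + adj J T with hS
  have hSa : IsSa J S := isSa_add_adj hJt hJJ T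
  have hSs : S ∈ s := by
    have : S = (2 : K) • T - (T - adj J T) := by rw [two_smul, hS]; abel
    rw [this]
    exact s.sub_mem (s.smul_mem _ hTs) (hsp _ (isSk_sub_adj hJt hJJ T))
  have hv0 : v ≠ 0 := by
    rintro rfl
    exact hv 0 (by simp)
  have h1 : rankOne J (S *ᵥ v) v ∈ s := by
    have h2 := hs _ hSs _ (rankOne_self_mem hJt s hsp v)
    rw [mul_rankOne, rankOne_mul_sa hSa] at h2
    have h3 := s.add_mem h2 (hsp _ (isSk_rankOne_add hJt (S *ᵥ v) v))
    have h4 : rankOne J (S *ᵥ v) v - rankOne J v (S *ᵥ v) + (rankOne J (S *ᵥ v) v +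
      rankOne J v (S *ᵥ v)) = (2 : K) • rankOne J (S *ᵥ v) v := by rw [two_smul]; abel
    rw [h4] at h3
    exact (s.smul_mem_iff two_ne_zero).1 h3
  have hG := spread hJt hJJ s hs hsp hv0 hv h1
  -- `single i j c` is `rankOne J (c • eᵢ) w` for the `w` representing the `j`-th coordinate.
  have hoff : ∀ i j, i ≠ j → ∀ c : K, single i j c ∈ s := by
    intro i j hij c
    obtain ⟨w, hw⟩ := exists_vecMul_eq hJJ (Pi.single j (1 : K))
    have hw0 : w ≠ 0 := by
      rintro rfl
      have := congrFun hw j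
      simp at this
    have := transfer hJt hJJ s hs hsp hcard hv0 hw0 hG (Pi.single i c)
      (by rw [omega_symm hJt, omega, hw]; simp [hij])
    rw [rankOne, hw] at this
    convert this using 1
    ext k l
    simp [vecMulVec_apply, single_apply, Pi.single_apply, ← ite_and, eq_comm, and_comm]
  have hdiag : ∀ i j, ∀ c : K, single i i c - single j j c ∈ s := by
    intro i j c
    by_cases hij : i = j
    · simp [hij]
    · simpa using hs _ (hoff i j hij c) _ (hoff j i (Ne.symm hij) 1)
  -- Subtracting `(tr M) • E_{i₀ i₀} = 0` writes `M` as a sum of the matrices above.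
  let i₀ : ι := Classical.arbitrary ι
  have hdec : M = ∑ i, ∑ j, (single i j (M i j) - if i = j then single i₀ i₀ (M i i) else 0) := by
    simp only [Finset.sum_sub_distrib, Finset.sum_ite_eq, Finset.mem_univ, if_true]
    rw [← matrix_eq_sum_single]
    have : ∑ i, single i₀ i₀ (M i i) = single i₀ i₀ M.trace := by
      rw [trace, ← singleAddMonoidHom_apply]
      simp [map_sum]
    rw [this, hM]; simp
  rw [hdec]
  refine s.sum_mem fun i _ => s.sum_mem fun j _ => ?_
  split_ifs with hij
  · subst hij; exact hdiag _ _ _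
  · rw [sub_zero]; exact hoff i j hij _

end Sub

/-! ### The normalizer of `𝔰𝔭` -/

lemma IsSk.lie {X Y : Matrix ι ι K} (hX : IsSk J X) (hY : IsSk J Y) : IsSk J (X * Y - Y * X) := by
  have h1 : Xᵀ * J = -(J * X) := eq_neg_iff_add_eq_zero.2 hX
  have h2 : Yᵀ * J = -(J * Y) := eq_neg_iff_add_eq_zero.2 hY
  simp only [IsSk, transpose_sub, transpose_mul, sub_mul, mul_sub, mul_assoc, h1, h2, mul_neg]
  simp only [← mul_assoc, h1, h2]
  noncomm_ring

lemma IsSk.mul_isSa {X Y : Matrix ι ι K} (hX : IsSk J X) (hY : IsSk J Y) (hXY : X * Y = Y * X) :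
    IsSa J (X * Y) := by
  have h1 : Xᵀ * J = -(J * X) := eq_neg_iff_add_eq_zero.2 hX
  have h2 : Yᵀ * J = -(J * Y) := eq_neg_iff_add_eq_zero.2 hY
  rw [IsSa, transpose_mul, mul_assoc, h1, mul_neg, ← mul_assoc, h2, hXY]
  noncomm_ring

lemma IsSk.smul_sub {X Y : Matrix ι ι K} (hX : IsSk J X) (hY : IsSk J Y) (c : K) :
    IsSk J (c • X - Y) := by
  unfold IsSk at hX hY ⊢
  rw [transpose_sub, sub_mul, mul_sub, sub_add_sub_comm, hY, transpose_smul, Matrix.smul_mul,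
    Matrix.mul_smul, ← smul_add, hX, smul_zero, sub_zero]

/-- `𝔰𝔭` is its own normalizer in `𝔰𝔩`. The self-adjoint part `S` of a normalizing `X` also
normalizes, and its bracket with a skew matrix is also self-adjoint, hence zero; commuting with
all transvections, `S` is scalar. -/
lemma isSk_of_normalizes [CharZero K] [Nonempty ι] (hJt : Jᵀ = -J) (hJJ : J * J = -1)
    {X : Matrix ι ι K} (hX0 : X.trace = 0)
    (hX : ∀ Y, IsSk J Y → IsSk J (X * Y - Y * X)) : IsSk J X := by
  by_contra hcon
  obtain ⟨v, hv⟩ := exists_not_smul hJJ hX0 hcon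
  set S := X + adj J X with hS
  have hSa : IsSa J S := isSa_add_adj hJt hJJ X
  have hv0 : v ≠ 0 := by
    rintro rfl
    exact hv 0 (by simp)
  have hvv := isSk_rankOne_self hJt v
  have h1 : IsSk J (S * rankOne J v v - rankOne J v v * S) := by
    have h2 := hX _ hvv
    have h3 := (isSk_sub_adj hJt hJJ X).lie hvv
    have : S = (2 : K) • X - (X - adj J X) := by rw [two_smul, hS]; abel
    have e : S * rankOne J v v - rankOne J v v * S =
        (2 : K) • (X * rankOne J v v - rankOne J v v * X) -
        ((X - adj J X) * rankOne J v v - rankOne J v v * (X - adj J X)) := by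
      rw [this, two_smul, two_smul]; noncomm_ring
    rw [e]
    exact h2.smul_sub h3 2
  rw [mul_rankOne, rankOne_mul_sa hSa] at h1
  have h2 := eq_zero_of_isSk_of_isSa hJJ h1 (isSa_rankOne_sub hJt _ _)
  obtain ⟨a, ha⟩ := exists_omega_eq_one hJJ hv0
  have h3 := congrArg (· *ᵥ a) h2
  simp only [sub_mulVec, rankOne_mulVec, ha, one_smul, zero_mulVec] at h3
  exact hv _ (sub_eq_zero.1 h3)

end Generic

/-! ### No Cartan subalgebra of `𝔰𝔩(6, ℂ)` is contained in `𝔰𝔭(6, ℂ)` -/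

section Cartan

open LieAlgebra.SpecialLinear LieModule

variable {ι : Type} [Fintype ι] [DecidableEq ι]

lemma sl_isIrreducible (hcard : 1 < Fintype.card ι) :
    LieModule.IsIrreducible ℂ (sl ι ℂ) (ι → ℂ) := by
  have : Nonempty ι := Fintype.card_pos_iff.1 (by omega)
  have : Nontrivial ι := Fintype.one_lt_card_iff_nontrivial.1 hcard
  refine LieModule.IsIrreducible.mk fun N hN => ?_
  obtain ⟨v, hvN, hv0⟩ := N.toSubmodule.exists_mem_ne_zero_of_ne_bot (by simpa using hN)
  obtain ⟨k, hk⟩ : ∃ k, v k ≠ 0 := by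
    by_contra! h
    exact hv0 (funext h)
  have h1 : ∀ i, i ≠ k → Pi.single i (1 : ℂ) ∈ N := by
    intro i hi
    have h2 : ⁅SpecialLinear.single i k hi ((v k)⁻¹), v⁆ ∈ N := N.lie_mem hvN
    convert h2 using 1
    change _ = Matrix.single i k _ *ᵥ v
    ext m
    simp [single_mulVec, Function.update_apply, Pi.single_apply, hk]
  have h2 : ∀ i, Pi.single i (1 : ℂ) ∈ N := by
    intro i
    by_cases hi : i = k
    · obtain ⟨j, hj⟩ := exists_ne i
      have h3 : ⁅SpecialLinear.single i j hj.symm (1 : ℂ), (Pi.single j 1 : ι → ℂ)⁆ ∈ N :=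
        N.lie_mem (h1 j (hi ▸ hj))
      convert h3 using 1
      change _ = Matrix.single i j _ *ᵥ _
      ext m
      simp [Pi.single_apply, Matrix.single_apply, eq_comm]
    · exact h1 i hi
  rw [eq_top_iff]
  intro w _
  rw [pi_eq_sum_univ' w]
  refine N.toSubmodule.sum_mem fun i _ => N.smul_mem _ ?_
  exact h2 i

/-- The natural module of `𝔰𝔩` is faithful, irreducible and traceless, so `𝔰𝔩` is semisimple. -/
lemma sl_isKilling (hcard : 1 < Fintype.card ι) : LieAlgebra.IsKilling ℂ (sl ι ℂ) := by
  have := sl_isIrreducible hcard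
  have : HasTrivialRadical ℂ (sl ι ℂ) := by
    refine hasTrivialRadical_of_isIrreducible_of_isFaithful ℂ (sl ι ℂ) (ι → ℂ) fun x => ?_
    have h : toEnd ℂ (sl ι ℂ) (ι → ℂ) x = Matrix.toLin' x.1 := by
      ext; rfl
    rw [h, Matrix.trace_toLin'_eq]
    exact x.2
  infer_instance

lemma lie_val (x y : sl ι ℂ) : (⁅x, y⁆ : sl ι ℂ).1 = x.1 * y.1 - y.1 * x.1 := rfl

/-- A Cartan subalgebra of `𝔰𝔩(6, ℂ)` is not contained in `𝔰𝔭(6, ℂ)`. -/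
lemma not_cartan_le {J : Matrix ι ι ℂ} (hJJ : J * J = -1)
    (hcard : Fintype.card ι = 6) (H : LieSubalgebra ℂ (sl ι ℂ)) [H.IsCartanSubalgebra]
    (hH : ∀ x ∈ H, IsSk J x.1) : False := by
  have : Nontrivial ι := Fintype.one_lt_card_iff_nontrivial.1 (by omega)
  have := sl_isKilling (ι := ι) (by omega)
  have hcomm : ∀ x ∈ H, ∀ y ∈ H, x.1 * y.1 = y.1 * x.1 := by
    intro x hx y hy
    have h : (⁅(⟨x, hx⟩ : H), (⟨y, hy⟩ : H)⁆ : H) = 0 := trivial_lie_zero _ _ _ _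
    have h2 : x.1 * y.1 - y.1 * x.1 = 0 := congrArg (fun z : H => z.1.1) h
    exact sub_eq_zero.1 h2
  -- `H` is its own normalizer, so it contains every traceless matrix commuting with it.
  have hcent : ∀ M : Matrix ι ι ℂ, (∀ x ∈ H, M * x.1 = x.1 * M) →
      ∃ h ∈ H, M = h.1 + (M.trace / 6) • 1 := by
    intro M hM
    have htr : M - (M.trace / 6) • (1 : Matrix ι ι ℂ) ∈ sl ι ℂ := by
      change trace _ = 0
      rw [trace_sub, trace_smul, trace_one, hcard]
      push_cast
      rw [smul_eq_mul]; ring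
    refine ⟨⟨_, htr⟩, ?_, by simp⟩
    rw [← LieSubalgebra.IsCartanSubalgebra.self_normalizing (H := H),
      LieSubalgebra.mem_normalizer_iff]
    intro y hy
    convert H.zero_mem
    apply Subtype.ext
    rw [lie_val]
    simp [sub_mul, mul_sub, hM y hy]
  have hprod : ∀ x ∈ H, ∀ y ∈ H, ∃ c : ℂ, x.1 * y.1 = c • 1 := by
    intro x hx y hy
    obtain ⟨h, hh, e⟩ := hcent (x.1 * y.1) fun z hz => by
      rw [mul_assoc, hcomm y hy z hz, ← mul_assoc, hcomm x hx z hz, mul_assoc]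
    refine ⟨(x.1 * y.1).trace / 6, ?_⟩
    have h1 := (hH x hx).mul_isSa (hH y hy) (hcomm x hx y hy)
    have h2 : IsSa J h.1 := by
      rw [eq_sub_of_add_eq e.symm]
      unfold IsSa at h1 ⊢
      rw [transpose_sub, sub_mul, mul_sub, h1]
      simp
    rwa [eq_zero_of_isSk_of_isSa hJJ (hH h hh) h2, zero_add] at e
  by_cases hnil : ∀ x ∈ H, x.1 * x.1 = 0
  · -- All of `H` is square-zero, hence ad-nilpotent; being ad-semisimple too, it vanishes.
    obtain ⟨i, j, hij⟩ := exists_pair_ne ι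
    have : Nontrivial (sl ι ℂ) := by
      refine ⟨SpecialLinear.single i j hij 1, 0, fun h => ?_⟩
      have h1 : Matrix.single i j (1 : ℂ) = 0 := congrArg Subtype.val h
      simpa using congrFun (congrFun h1 i) j
    refine LieSubalgebra.ne_bot_of_isCartanSubalgebra H ((LieSubalgebra.eq_bot_iff H).2 ?_)
    intro x hx
    have hss := IsKilling.isSemisimple_ad_of_mem_isCartanSubalgebra hx
    have hx2 := hnil x hx
    have hn : IsNilpotent (ad ℂ (sl ι ℂ) x) := by
      refine ⟨3, ?_⟩
      ext1 y
      apply Subtype.ext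
      change x.1 * (x.1 * (x.1 * y.1 - y.1 * x.1) - (x.1 * y.1 - y.1 * x.1) * x.1) -
        (x.1 * (x.1 * y.1 - y.1 * x.1) - (x.1 * y.1 - y.1 * x.1) * x.1) * x.1 = 0
      have h1 : ∀ M, x.1 * (x.1 * M) = 0 := fun M => by rw [← mul_assoc, hx2, zero_mul]
      simp [mul_sub, sub_mul, mul_assoc, h1, hx2]
    have h0 := Module.End.eq_zero_of_isNilpotent_isSemisimple hn hss
    have : x ∈ LieAlgebra.center ℂ (sl ι ℂ) := by
      rw [LieModule.mem_maxTrivSubmodule]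
      intro y
      rw [← lie_skew, neg_eq_zero]
      exact LinearMap.congr_fun h0 y
    rwa [center_eq_bot, LieSubmodule.mem_bot] at this
  · push Not at hnil
    obtain ⟨x, hx, hxx⟩ := hnil
    obtain ⟨c, hc⟩ := hprod x hx x hx
    have hc0 : c ≠ 0 := by
      rintro rfl
      exact hxx (by rw [hc, zero_smul])
    obtain ⟨l, hl⟩ := IsAlgClosed.exists_pow_nat_eq c (n := 2) (by norm_num)
    have hl0 : l ≠ 0 := by
      rintro rfl
      exact hc0 (by rw [← hl]; simp)
    have hline : ∀ y ∈ H, ∃ d : ℂ, y.1 = d • x.1 := by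
      intro y hy
      obtain ⟨d, hd⟩ := hprod x hx y hy
      refine ⟨c⁻¹ * d, ?_⟩
      have h1 : x.1 * (x.1 * y.1) = c • y.1 := by rw [← mul_assoc, hc]; simp
      rw [hd] at h1
      rw [mul_smul, eq_inv_smul_iff₀ hc0, ← h1]
      simp
    -- `P` is the projection onto the eigenspace of `x` with eigenvalue `l`.
    obtain ⟨P, hP⟩ : ∃ P, P = (2 * l)⁻¹ • (x.1 + l • 1) := ⟨_, rfl⟩
    have hxP : x.1 * P = l • P := by
      rw [hP, Matrix.mul_smul, mul_add, hc, smul_comm l, ← hl, Matrix.mul_smul, mul_one,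
        smul_add l, smul_smul l l, ← pow_two, add_comm]
    have hPx : P * x.1 = l • P := by
      rw [← hxP, hP]
      simp [mul_add, add_mul]
    have hPP : P * P = P := by
      nth_rewrite 1 [hP]
      rw [Matrix.smul_mul, add_mul, hxP, Matrix.smul_mul, one_mul, ← add_smul, smul_smul]
      rw [← two_mul, inv_mul_cancel₀ (mul_ne_zero two_ne_zero hl0), one_smul]
    have htrP : P.trace = 3 := by
      have hx0 : x.1.trace = 0 := x.2
      rw [hP, trace_smul, trace_add, hx0, trace_smul, trace_one, hcard]
      simp only [smul_eq_mul]
      push_cast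
      field_simp
      ring
    -- `P A P` commutes with `x`, so it lies in the span of `x` and `1`.
    have hPAP : ∀ A : Matrix ι ι ℂ, ∃ f : ℂ, P * A * P = f • P := by
      intro A
      obtain ⟨h, hh, e⟩ := hcent (P * A * P) fun y hy => by
        obtain ⟨d, hd⟩ := hline y hy
        rw [hd, Matrix.mul_smul, Matrix.smul_mul, mul_assoc (P * A), hPx, ← mul_assoc, ← mul_assoc,
          hxP]
        simp
      obtain ⟨d, hd⟩ := hline h hh
      refine ⟨d * l + (P * A * P).trace / 6, ?_⟩
      have h1 : P * (P * A * P) * P = P * A * P := by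
        rw [← mul_assoc, ← mul_assoc, hPP, mul_assoc _ P P, hPP]
      conv_lhs => rw [← h1, e]
      rw [hd, mul_add, Matrix.mul_smul, hPx, add_mul, smul_smul, Matrix.smul_mul, hPP,
        Matrix.mul_smul, mul_one, Matrix.smul_mul, hPP, add_smul]
    -- Taking `A = E_{ij}`, the scalar is found from the trace of `P`.
    have hentry : ∀ i j k m, 3 * (P k i * P j m) = P j i * P k m := by
      intro i j k m
      obtain ⟨f, hf⟩ := hPAP (Matrix.single i j 1)
      have h1 : 3 * f = P j i := by
        have := congrArg trace hf
        rw [trace_mul_comm, ← mul_assoc, hPP, trace_smul, htrP, trace_mul_single] at this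
        rw [smul_eq_mul, op_smul_eq_mul, mul_one] at this
        linear_combination -this
      have h2 := congrFun (congrFun hf k) m
      have h3 : (P * Matrix.single i j (1 : ℂ) * P : Matrix ι ι ℂ) k m = P k i * P j m := by
        rw [single_eq_single_vecMulVec_single, mul_vecMulVec, vecMulVec_mul, vecMulVec_apply]
        simp
      rw [h3, Matrix.smul_apply, smul_eq_mul] at h2
      rw [h2, ← h1]; ring
    -- Summing over `i = k` gives `9 P = P`.
    have hzero : ∀ j m, P j m = 0 := by
      intro j m
      have h1 : ∑ i, 3 * (P i i * P j m) = ∑ i, P j i * P i m :=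
        Finset.sum_congr rfl fun i _ => hentry i j i m
      rw [← Finset.mul_sum, ← Finset.sum_mul, ← Matrix.mul_apply, hPP] at h1
      have h2 : ∑ i, P i i = 3 := htrP
      rw [h2] at h1
      linear_combination (1 / 8 : ℂ) * h1
    have : P.trace = 0 := by simp [trace, hzero]
    rw [htrP] at this
    norm_num at this

end Cartan

/-! ### The embedding of `𝔰𝔭(6)` into `𝔰𝔩(6)` -/

section Assembly

open LieAlgebra.SpecialLinear

/-- The standard symplectic form, with its rows and columns indexed by `Fin 6`. -/
def JF (K : Type*) [CommRing K] : Matrix (Fin 6) (Fin 6) K :=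
  Matrix.reindex finSumFinEquiv finSumFinEquiv (Matrix.J (Fin 3) K)

lemma JF_transpose (K : Type*) [CommRing K] : (JF K)ᵀ = -JF K := by
  rw [JF, transpose_reindex, Matrix.J_transpose]
  rfl

lemma JF_mul_JF (K : Type*) [CommRing K] : JF K * JF K = -1 := by
  rw [JF, reindex_apply, submatrix_mul_equiv, Matrix.J_squared]
  simp [submatrix_neg]

lemma mem_sp_iff (K : Type*) [Field K] (A : Matrix (Fin 3 ⊕ Fin 3) (Fin 3 ⊕ Fin 3) K) :
    A ∈ Symplectic.sp (Fin 3) K ↔ IsSk (JF K) (reindex finSumFinEquiv finSumFinEquiv A) := by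
  have h1 : A ∈ Symplectic.sp (Fin 3) K ↔ Aᵀ * Matrix.J (Fin 3) K = Matrix.J (Fin 3) K * (-A) := by
    rw [Symplectic.sp, mem_skewAdjointMatricesLieSubalgebra, mem_skewAdjointMatricesSubmodule]
    rfl
  rw [h1, mul_neg, eq_neg_iff_add_eq_zero, IsSk, JF, transpose_reindex]
  simp only [reindex_apply, submatrix_mul_equiv]
  rw [← (reindex finSumFinEquiv finSumFinEquiv).injective.eq_iff]
  rfl

/-- The inclusion of `𝔰𝔭(6, ℝ)` into `𝔰𝔩(6, ℝ)`, relabelling the indices `Fin 3 ⊕ Fin 3` as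
`Fin 6`. -/
noncomputable def embed : ↥(Symplectic.sp (Fin 3) ℝ) →ₗ⁅ℝ⁆ ↥(sl (Fin 6) ℝ) where
  toFun A := ⟨reindex finSumFinEquiv finSumFinEquiv A.1,
    trace_eq_zero_of_isSk (JF_mul_JF ℝ) ((mem_sp_iff ℝ A.1).1 A.2)⟩
  map_add' := fun _ _ => rfl
  map_smul' := fun _ _ => rfl
  map_lie' := by
    intro A B
    apply Subtype.ext
    change reindex _ _ (A.1 * B.1 - B.1 * A.1) = reindex _ _ A.1 * reindex _ _ B.1 -
      reindex _ _ B.1 * reindex _ _ A.1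
    simp only [reindex_apply, submatrix_mul_equiv]
    rfl

lemma embed_injective : Function.Injective embed := fun A B h =>
  Subtype.ext ((reindex finSumFinEquiv finSumFinEquiv).injective (congrArg Subtype.val h))

lemma exists_embed_eq {X : Matrix (Fin 6) (Fin 6) ℝ} (hX : IsSk (JF ℝ) X) :
    ∃ A, (embed A).1 = X :=
  ⟨⟨(reindex finSumFinEquiv finSumFinEquiv).symm X, (mem_sp_iff ℝ _).2 (by
    rwa [Equiv.apply_symm_apply])⟩, Equiv.apply_symm_apply _ X⟩

lemma mem_range_embed {x : ↥(sl (Fin 6) ℝ)} : x ∈ embed.range ↔ IsSk (JF ℝ) x.1 := by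
  rw [LieHom.mem_range]
  constructor
  · rintro ⟨A, rfl⟩
    exact (mem_sp_iff ℝ A.1).1 A.2
  · intro h
    obtain ⟨A, hA⟩ := exists_embed_eq h
    exact ⟨A, Subtype.ext hA⟩

/-- A subalgebra of `𝔰𝔩(6)` as a subspace of the space of all matrices. -/
def toMatrices {K : Type*} [Field K] (s : LieSubalgebra K ↥(sl (Fin 6) K)) :
    Submodule K (Matrix (Fin 6) (Fin 6) K) where
  carrier := {X | ∃ x ∈ s, x.1 = X}
  add_mem' := by
    rintro _ _ ⟨a, ha, rfl⟩ ⟨b, hb, rfl⟩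
    exact ⟨a + b, add_mem ha hb, rfl⟩
  zero_mem' := ⟨0, zero_mem s, rfl⟩
  smul_mem' := by
    rintro c _ ⟨a, ha, rfl⟩
    exact ⟨c • a, s.smul_mem c ha, rfl⟩

lemma eq_top_of_mem {K : Type*} [Field K] [CharZero K] (s : LieSubalgebra K ↥(sl (Fin 6) K))
    (hsp : ∀ x : ↥(sl (Fin 6) K), IsSk (JF K) x.1 → x ∈ s) {t : ↥(sl (Fin 6) K)} (hts : t ∈ s)
    (ht : ¬ IsSk (JF K) t.1) : s = ⊤ := by
  rw [eq_top_iff]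
  intro x _
  have h := mem_of_trace_eq_zero (JF_transpose K) (JF_mul_JF K)
    (toMatrices s)
    (by
      rintro _ ⟨a, ha, rfl⟩ _ ⟨b, hb, rfl⟩
      exact ⟨⁅a, b⁆, s.lie_mem ha hb, rfl⟩)
    (fun X hX => ⟨⟨X, trace_eq_zero_of_isSk (JF_mul_JF K) hX⟩, hsp _ hX, rfl⟩)
    (by simp) ⟨t, hts, rfl⟩ t.2 ht x.1 x.2
  obtain ⟨y, hy, hyx⟩ := h
  exact Subtype.ext hyx ▸ hy

/-- The image of `embed` is maximal; it is proper because it misses the matrix unit `E₀₁`. -/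
lemma isMax_range_embed : IsMaxSubalgebra embed.range := by
  refine ⟨fun h => ?_, fun s hs hle => ?_⟩
  · have h1 : SpecialLinear.single (0 : Fin 6) 1 (by decide) (1 : ℝ) ∈ embed.range := by
      rw [h]; trivial
    have h2 := congrFun (congrFun (mem_range_embed.1 h1) 1) 3
    revert h2
    change ((Matrix.single (0 : Fin 6) 1 (1 : ℝ))ᵀ * JF ℝ + JF ℝ * Matrix.single 0 1 1 :
      Matrix (Fin 6) (Fin 6) ℝ) 1 3 ≠ 0
    have h3 : JF ℝ 0 3 = -1 := by
      change Matrix.J (Fin 3) ℝ (Sum.inl 0) (Sum.inr 0) = -1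
      simp [Matrix.J]
    rw [transpose_single, Matrix.add_apply, single_mul_apply_same, mul_single_apply_of_ne, h3]
    · norm_num
    · decide
  · refine le_antisymm (fun x hx => ?_) hle
    by_contra hcon
    exact hs (eq_top_of_mem s (fun y hy => hle (mem_range_embed.2 hy)) hx
      fun h => hcon (mem_range_embed.2 h))

lemma ofReal_re_add_im (X : Matrix (Fin 6) (Fin 6) ℂ) :
    X = (X.map Complex.re).map Complex.ofReal + Complex.I • (X.map Complex.im).map Complex.ofReal := by
  ext i j
  simp [mul_comm Complex.I, Complex.re_add_im]

lemma JF_complex : JF ℂ = (JF ℝ).map Complex.ofReal := by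
  ext i j
  simp only [JF, reindex_apply, submatrix_apply, map_apply]
  generalize (finSumFinEquiv (m := 3) (n := 3)).symm i = a
  generalize (finSumFinEquiv (m := 3) (n := 3)).symm j = b
  rcases a with a | a <;> rcases b with b | b <;> simp [Matrix.J, Matrix.one_apply, apply_ite]

lemma isSk_re_im {X : Matrix (Fin 6) (Fin 6) ℂ} (hX : IsSk (JF ℂ) X) :
    IsSk (JF ℝ) (X.map Complex.re) ∧ IsSk (JF ℝ) (X.map Complex.im) := by
  constructor
  · ext i j
    have := congrArg Complex.re (congrFun (congrFun hX i) j)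
    simpa [JF_complex, Matrix.mul_apply] using this
  · ext i j
    have := congrArg Complex.im (congrFun (congrFun hX i) j)
    simpa [JF_complex, Matrix.mul_apply] using this

/-- The complexification of the image of `embed` contains `𝔰𝔭(6, ℂ)`: the real and imaginary parts
of a complex skew matrix are real skew matrices. -/
lemma mem_complexifiedRange {x : ↥(sl (Fin 6) ℂ)} (hx : IsSk (JF ℂ) x.1) :
    x ∈ complexifiedRange embed := by
  obtain ⟨hre, him⟩ := isSk_re_im hx
  have key : ∀ Y : Matrix (Fin 6) (Fin 6) ℝ, IsSk (JF ℝ) Y →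
      ∃ y ∈ complexifiedRange embed, y.1 = Y.map Complex.ofReal := by
    intro Y hY
    obtain ⟨A, hA⟩ := exists_embed_eq hY
    have htr : Y.map Complex.ofReal ∈ sl (Fin 6) ℂ := by
      have h := congrArg Complex.ofReal (trace_eq_zero_of_isSk (JF_mul_JF ℝ) hY)
      change trace (Y.map Complex.ofReal) = 0
      simpa [trace] using h
    exact ⟨⟨_, htr⟩, LieSubalgebra.subset_lieSpan ⟨A, by rw [hA]⟩, rfl⟩
  obtain ⟨a, ha, ea⟩ := key _ hre
  obtain ⟨b, hb, eb⟩ := key _ him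
  have : x = a + Complex.I • b := by
    apply Subtype.ext
    change x.1 = a.1 + Complex.I • b.1
    rw [ea, eb]
    exact ofReal_re_add_im x.1
  rw [this]
  exact add_mem ha (LieSubalgebra.smul_mem _ _ hb)

/-- The complexification of the image of `embed` lies in no proper regular subalgebra. -/
lemma not_regular (r : LieSubalgebra ℂ ↥(sl (Fin 6) ℂ)) (hr : r.IsRegularSubalgebra)
    (htop : r ≠ ⊤) (hle : complexifiedRange embed ≤ r) : False := by
  obtain ⟨H, hH, hn⟩ := hr
  have hsk : ∀ y ∈ r, IsSk (JF ℂ) y.1 := by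
    intro y hy
    by_contra hcon
    exact htop (eq_top_of_mem r (fun x hx => hle (mem_complexifiedRange hx)) hy hcon)
  refine not_cartan_le (JF_mul_JF ℂ) (by simp) H fun x hx => ?_
  refine isSk_of_normalizes (JF_transpose ℂ) (JF_mul_JF ℂ) x.2 fun Y hY => ?_
  obtain ⟨y, rfl⟩ : ∃ y : ↥(sl (Fin 6) ℂ), y.1 = Y :=
    ⟨⟨Y, trace_eq_zero_of_isSk (JF_mul_JF ℂ) hY⟩, rfl⟩
  rw [← lie_val]
  exact hsk _ (hn x hx y (hle (mem_complexifiedRange hY)))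

end Assembly
end SpMax

theorem sp6_maximal_S_subalgebra_of_sl6 :
    ∃ φ : ↥(Symplectic.sp (Fin 3) ℝ) →ₗ⁅ℝ⁆ ↥(SpecialLinear.sl (Fin 6) ℝ),
      Function.Injective φ ∧
      IsMaxSubalgebra φ.range ∧
      ¬ ∃ r : LieSubalgebra ℂ ↥(SpecialLinear.sl (Fin 6) ℂ),
          r.IsRegularSubalgebra ∧ r ≠ ⊤ ∧ complexifiedRange φ ≤ r :=
  ⟨SpMax.embed, SpMax.embed_injective, SpMax.isMax_range_embed,
    fun ⟨r, hr, htop, hle⟩ => SpMax.not_regular r hr htop hle⟩
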